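/- Let P be the linear map defined on families (b_j^k) (with |j| ≤ M and k ranging over finitely supported integer sequences with ‖k‖ ≤ K, k ≠ ±⟨j⟩) by (Pb)_j^{±⟨j⟩} = −(1/2)(ω_j/ε) Σ_{k≠±⟨j⟩} (ε^{[[k]]}/ω^{|k|}) b_j^k, with [[k]] = (‖k‖+1)/2 ≥ 3/2 for the relevant k (so ε^{[[k]]} ≤ ε^{3/2} ≤ ε for ε ≤ 1). Then ‖Pb‖_s² := Σ_j ω_j^{2s}|(Pb)_j^{±⟨j⟩}|² ≤ C ‖b‖_{s+1}², where ‖b‖_{s+1}² = Σ_{k} Σ_j ω_j^{2(s+1)}|b_j^k|² and C depends only on C_{K} = Σ_{‖k‖≤K} ω^{−2|k|}. -/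

import Mathlib

/-!
For fixed `j`, the coefficient of `b j k` in the inner sum is `ε^{[[k]]} / ω^{|k|}`. Since
`[[k]] ≥ 1` for every `k` (with value `3/2` at `k = 0`) and `ε ≤ 1`, it is at most `ε / ω^{|k|}`,
so that the factor `1 / ε` in front of the sum is absorbed. Cauchy–Schwarz in `k` then gives
`(Pb j)² ≤ (1/4) ω_j² C_K Σ_k (b j k)²`. Multiplying by `ω_j^{2s}`, summing over the finitely many
`j` and exchanging the two sums yields the bound, with the factor `1/4` to spare.
-/

def knorm (k : ℕ →₀ ℤ) : ℤ := k.sum fun _ v => |v|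

noncomputable def bracket (k : ℕ →₀ ℤ) : ℝ :=
  if k = 0 then 3/2 else ((knorm k : ℝ) + 1) / 2

noncomputable def omz (ρ : ℝ) (j : ℤ) : ℝ := Real.sqrt (ρ + (j : ℝ)^2)

noncomputable def wnorm (ρ : ℝ) (k : ℕ →₀ ℤ) : ℝ :=
  ∏ l ∈ k.support, Real.sqrt (ρ + (l : ℝ)^2) ^ (k l).natAbs

/-- Cauchy–Schwarz for infinite sums of reals; `f * g` need not be assumed summable, because
square summability of both factors implies it. -/
lemma sq_tsum_mul_le {ι : Type*} {f g : ι → ℝ} (hf : Summable fun i => f i ^ 2)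
    (hg : Summable fun i => g i ^ 2) :
    (∑' i, f i * g i) ^ 2 ≤ (∑' i, f i ^ 2) * ∑' i, g i ^ 2 := by
  have hfg : Summable fun i => f i * g i := by
    refine Summable.of_norm_bounded (hf.add hg) fun i => ?_
    rw [Real.norm_eq_abs, abs_le]
    constructor <;> nlinarith [sq_nonneg (f i + g i), sq_nonneg (f i - g i), sq_nonneg (f i),
      sq_nonneg (g i)]
  exact le_of_tendsto_of_tendsto' (Filter.Tendsto.pow hfg.hasSum 2)
    (Filter.Tendsto.mul hf.hasSum hg.hasSum)
    fun t => Finset.sum_mul_sq_le_sq_mul_sq t f g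

lemma one_le_knorm {k : ℕ →₀ ℤ} (hk : k ≠ 0) : 1 ≤ knorm k := by
  obtain ⟨l, hl⟩ := Finsupp.support_nonempty_iff.2 hk
  have h1 : |k l| ≤ knorm k :=
    Finset.single_le_sum (f := fun l => |k l|) (fun i _ => abs_nonneg _) hl
  exact (Int.one_le_abs (Finsupp.mem_support_iff.1 hl)).trans h1

lemma one_le_bracket (k : ℕ →₀ ℤ) : 1 ≤ bracket k := by
  unfold bracket
  split_ifs with hk
  · norm_num
  · have h : (1 : ℝ) ≤ knorm k := by exact_mod_cast one_le_knorm hk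
    linarith

lemma omz_pos {ρ : ℝ} (hρ : 1 ≤ ρ) (j : ℤ) : 0 < omz ρ j :=
  Real.sqrt_pos.2 (by positivity)

/-- The squared coefficient bound `(ε^{[[k]]} / ω^{|k|})² ≤ ε² ω^{-2|k|}`, also valid at the
excluded indices, where the coefficient is replaced by `0`. -/
lemma coeff_sq_le {ρ ε : ℝ} (hε0 : 0 < ε) (hε1 : ε ≤ 1) (k : ℕ →₀ ℤ) (p : Prop) [Decidable p] :
    (if p then 0 else ε ^ bracket k / wnorm ρ k) ^ 2 ≤ ε ^ 2 * ((wnorm ρ k) ^ 2)⁻¹ := by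
  split_ifs
  · rw [zero_pow two_ne_zero]
    positivity
  · have h : ε ^ bracket k ≤ ε := by
      simpa using Real.rpow_le_rpow_of_exponent_ge hε0 hε1 (one_le_bracket k)
    rw [div_pow, div_eq_mul_inv]
    gcongr

/-- Bound for the initial-value operator `P` of the reverse Picard iteration:
`‖Pb‖_s² ≤ C ‖b‖_{s+1}²`, with `C` depending only on `C_K = Σ_{‖k‖≤K} ω^{−2|k|}`. -/
theorem stmt17 (ρ : ℝ) (hρ : 1 ≤ ρ) (ε : ℝ) (hε0 : 0 < ε) (hε1 : ε ≤ 1)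
    (s : ℝ) (M K : ℕ) (CK : ℝ)
    (hCK : HasSum (fun k : {k : ℕ →₀ ℤ // knorm k ≤ (K : ℤ)} =>
      ((wnorm ρ k.1)^2)⁻¹) CK)
    (b : ℤ → {k : ℕ →₀ ℤ // knorm k ≤ (K : ℤ)} → ℝ)
    (hb : ∀ j ∈ Finset.Icc (-(M : ℤ)) (M : ℤ),
      Summable (fun k : {k : ℕ →₀ ℤ // knorm k ≤ (K : ℤ)} => (b j k)^2))
    (hbs : Summable (fun k : {k : ℕ →₀ ℤ // knorm k ≤ (K : ℤ)} =>
      ∑ j ∈ Finset.Icc (-(M : ℤ)) (M : ℤ), omz ρ j ^ (2 * (s + 1)) * (b j k)^2))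
    (Pb : ℤ → ℝ)
    (hP : ∀ j, Pb j = -(1/2) * (omz ρ j / ε) *
      ∑' k : {k : ℕ →₀ ℤ // knorm k ≤ (K : ℤ)},
        (if k.1 = Finsupp.single j.natAbs (1 : ℤ) ∨
            k.1 = -Finsupp.single j.natAbs (1 : ℤ) then 0
         else (ε ^ bracket k.1 / wnorm ρ k.1) * b j k)) :
    ∑ j ∈ Finset.Icc (-(M : ℤ)) (M : ℤ), omz ρ j ^ (2 * s) * (Pb j)^2
      ≤ CK * ∑' k : {k : ℕ →₀ ℤ // knorm k ≤ (K : ℤ)},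
          ∑ j ∈ Finset.Icc (-(M : ℤ)) (M : ℤ), omz ρ j ^ (2 * (s + 1)) * (b j k)^2 := by
  have hj : ∀ j ∈ Finset.Icc (-(M : ℤ)) (M : ℤ), omz ρ j ^ (2 * s) * (Pb j)^2 ≤
      CK * ∑' k, omz ρ j ^ (2 * (s + 1)) * (b j k)^2 := by
    intro j hjM
    let c : {k : ℕ →₀ ℤ // knorm k ≤ (K : ℤ)} → ℝ := fun k =>
      if k.1 = Finsupp.single j.natAbs (1 : ℤ) ∨ k.1 = -Finsupp.single j.natAbs (1 : ℤ) then 0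
      else ε ^ bracket k.1 / wnorm ρ k.1
    have hle : ∀ k, c k ^ 2 ≤ ε ^ 2 * ((wnorm ρ k.1) ^ 2)⁻¹ := fun k => coeff_sq_le hε0 hε1 k.1 _
    have hmaj := hCK.mul_left (ε ^ 2)
    have hc : Summable fun k => c k ^ 2 :=
      Summable.of_nonneg_of_le (fun k => sq_nonneg _) hle hmaj.summable
    have hcs : ∑' k, c k ^ 2 ≤ ε ^ 2 * CK := hasSum_le hle hc.hasSum hmaj
    have hB : 0 ≤ ∑' k, (b j k) ^ 2 := tsum_nonneg fun k => sq_nonneg _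
    have hCK0 : 0 ≤ CK := hCK.nonneg fun k => by positivity
    have hS : (∑' k, c k * b j k) ^ 2 ≤ ε ^ 2 * CK * ∑' k, (b j k) ^ 2 :=
      (sq_tsum_mul_le hc (hb j hjM)).trans (mul_le_mul_of_nonneg_right hcs hB)
    have hPj : Pb j = -(1/2) * (omz ρ j / ε) * ∑' k, c k * b j k := by
      rw [hP j]
      simp only [c, ite_mul, zero_mul]
    have hω := omz_pos hρ j
    have hPsq : (Pb j) ^ 2 ≤ omz ρ j ^ 2 * (CK * ∑' k, (b j k) ^ 2) := by
      calc (Pb j) ^ 2 = 1/4 * (omz ρ j / ε) ^ 2 * (∑' k, c k * b j k) ^ 2 := by rw [hPj]; ring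
        _ ≤ 1/4 * (omz ρ j / ε) ^ 2 * (ε ^ 2 * CK * ∑' k, (b j k) ^ 2) := by gcongr
        _ = 1/4 * (omz ρ j ^ 2 * (CK * ∑' k, (b j k) ^ 2)) := by field_simp
        _ ≤ omz ρ j ^ 2 * (CK * ∑' k, (b j k) ^ 2) := by
          have : 0 ≤ omz ρ j ^ 2 * (CK * ∑' k, (b j k) ^ 2) := by positivity
          linarith
    have hpow : omz ρ j ^ (2 * (s + 1)) = omz ρ j ^ (2 * s) * omz ρ j ^ 2 := by
      rw [mul_add, Real.rpow_add hω, mul_one, Real.rpow_two]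
    rw [tsum_mul_left, hpow]
    calc omz ρ j ^ (2 * s) * (Pb j) ^ 2
        ≤ omz ρ j ^ (2 * s) * (omz ρ j ^ 2 * (CK * ∑' k, (b j k) ^ 2)) := by gcongr
      _ = _ := by ring
  rw [Summable.tsum_finsetSum fun j hjM => (hb j hjM).mul_left _, Finset.mul_sum]
  exact Finset.sum_le_sum hj
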